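/- The number of symmetric matrices in U(n, F_{q²}) (i.e. elements g of the finite unitary group with g^T = g) equals (q+1)·q²·(q³+1)·q⁴ ⋯ (q^n + (1−(−1)^n)/2). -/

import Mathlib

/-!
Let `K₀` be the fixed field of the involution of `K`. The map `h ↦ hᴴ * h` sends `GL n K` onto the
invertible Hermitian matrices, and all its fibres have the size of the unitary group. The value
`hᴴ * h` is symmetric exactly when `g = h * (conj h)⁻¹` is symmetric, and `g` is then unitary; by
Hilbert's Theorem 90 every symmetric unitary `g` arises in this way, from a coset of `GL n K₀`.
Since a Hermitian matrix is symmetric exactly when its entries lie in `K₀`, counting the `h` for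
which `hᴴ * h` is symmetric in both ways expresses the number of symmetric unitary matrices through
the orders of `GL n K₀` and `GL n K` and the numbers of invertible Hermitian matrices over `K` and
of invertible symmetric matrices over `K₀`. The last two obey one recursion, which peels off a row
and a column and is valid for every involution, the identity included.
-/

open Matrix

section Counting

variable {α β : Type*} [Finite α]

lemma card_subtype_eq_mul_of_card_fiber [Finite β] (f : α → β) {p : α → Prop} {q : β → Prop}
    (hpq : ∀ a, p a ↔ q (f a)) {c : ℕ} (hc : ∀ b, q b → Nat.card {a // f a = b} = c) :
    Nat.card {a // p a} = Nat.card {b // q b} * c := by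
  have := Fintype.ofFinite {b // q b}
  rw [← Nat.card_congr (Equiv.sigmaSubtypeFiberEquivSubtype f hpq), Nat.card_sigma,
    Finset.sum_congr rfl fun (b : {b // q b}) _ => hc b b.2]
  simp

lemma card_sigma_of_forall_ne {γ : α → Type*} [∀ a, Finite (γ a)] (a₀ : α) {c : ℕ}
    (hc : ∀ a, a ≠ a₀ → Nat.card (γ a) = c) :
    Nat.card (Σ a, γ a) = (Nat.card α - 1) * c + Nat.card (γ a₀) := by
  classical
  have := Fintype.ofFinite α
  rw [Nat.card_sigma, ← Finset.sum_erase_add _ _ (Finset.mem_univ a₀),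
    Finset.sum_congr rfl fun a ha => hc a (Finset.ne_of_mem_erase ha)]
  simp [Finset.card_erase_of_mem]

end Counting

section Involution

variable {K : Type*} [Field K] [StarRing K]

lemma exists_add_star_ne_zero (hstar : ∃ x : K, star x ≠ x) : ∃ x : K, x + star x ≠ 0 := by
  by_contra! hzero
  obtain ⟨x, hx⟩ := hstar
  have hone := hzero 1
  rw [star_one] at hone
  exact hx (by linear_combination hzero x - x * hone)

lemma exists_star_eq_mul (hstar : ∃ x : K, star x ≠ x) {y : K} (hy : y * star y = 1) :
    ∃ x : K, x ≠ 0 ∧ star x = y * x := by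
  by_contra! hzero
  have hrel (c : K) : star c + c * star y = 0 := by
    by_contra hc
    refine hzero _ hc ?_
    simp only [star_add, star_mul', star_star]
    linear_combination -c * hy
  obtain ⟨x, hx⟩ := hstar
  have h1 := hrel 1
  rw [star_one] at h1
  exact hx (by linear_combination hrel x - x * h1)

lemma exists_mul_star_eq [Finite K] (hstar : ∃ x : K, star x ≠ x) {c : K}
    (hc : IsSelfAdjoint c) : ∃ y : K, y * star y = c := by
  obtain rfl | hc0 := eq_or_ne c 0
  · exact ⟨0, zero_mul _⟩
  let conj : Kˣ →* Kˣ := Units.map (starRingEnd K : K →* K)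
  let norm : Kˣ →* Kˣ := MonoidHom.id _ * conj
  let quot : Kˣ →* Kˣ := conj / MonoidHom.id _
  have mem_ker_quot (x : Kˣ) : x ∈ quot.ker ↔ star (x : K) = x := by
    rw [MonoidHom.mem_ker, MonoidHom.div_apply, div_eq_one, Units.ext_iff]
    rfl
  have hilbert90 : norm.ker ≤ quot.range := fun y hy => by
    obtain ⟨x, hx, hxy⟩ := exists_star_eq_mul hstar (congrArg Units.val hy)
    exact ⟨Units.mk0 x hx, div_eq_iff_eq_mul.2 (Units.ext hxy)⟩
  have norm_le : norm.range ≤ quot.ker := by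
    rintro _ ⟨x, rfl⟩
    rw [mem_ker_quot]
    exact IsSelfAdjoint.mul_star_self (x : K)
  have card_ker_mul (f : Kˣ →* Kˣ) : Nat.card f.ker * Nat.card f.range = Nat.card Kˣ := by
    rw [← Subgroup.index_ker, Subgroup.card_mul_index]
  have card_le : Nat.card quot.ker ≤ Nat.card norm.range := by
    refine Nat.le_of_mul_le_mul_right ?_ (Nat.card_pos (α := quot.range))
    calc Nat.card quot.ker * Nat.card quot.range
        = Nat.card norm.range * Nat.card norm.ker := by
          rw [card_ker_mul, mul_comm, card_ker_mul]
      _ ≤ Nat.card norm.range * Nat.card quot.range :=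
          Nat.mul_le_mul_left _ (Subgroup.card_le_of_le hilbert90)
  obtain ⟨y, hy⟩ : Units.mk0 c hc0 ∈ norm.range := by
    rw [Subgroup.eq_of_le_of_card_ge norm_le card_le, mem_ker_quot]
    exact hc
  exact ⟨y, congrArg Units.val hy⟩

lemma card_eq_card_selfAdjoint_sq (hstar : ∃ x : K, star x ≠ x) :
    Nat.card K = Nat.card (selfAdjoint K) ^ 2 := by
  obtain ⟨e, he⟩ := hstar
  have he : star e - e ≠ 0 := sub_ne_zero.2 he
  have hstar_sub (a b : selfAdjoint K) :
      star (a + b * e : K) - (a + b * e) = b * (star e - e) := by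
    rw [star_add, star_mul', a.2.star_eq, b.2.star_eq]
    ring
  have hbij : Function.Bijective fun t : selfAdjoint K × selfAdjoint K => (t.1 + t.2 * e : K) := by
    constructor
    · rintro ⟨a, b⟩ ⟨a', b'⟩ (h : (a + b * e : K) = a' + b' * e)
      have hb : b = b' := Subtype.ext <| mul_right_cancel₀ he <| by
        rw [← hstar_sub a, h, hstar_sub]
      subst hb
      exact Prod.ext (Subtype.ext (add_right_cancel h)) rfl
    · intro x
      have hb : IsSelfAdjoint ((star x - x) / (star e - e)) := by
        rw [isSelfAdjoint_iff, star_div₀, star_sub, star_sub, star_star, star_star,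
          ← neg_sub x, ← neg_sub e, neg_div_neg_eq]
      have ha : IsSelfAdjoint (x - (star x - x) / (star e - e) * e) := by
        rw [isSelfAdjoint_iff, star_sub, star_mul', hb.star_eq]
        field_simp
        ring
      exact ⟨(⟨_, ha⟩, ⟨_, hb⟩), sub_add_cancel _ _⟩
  rw [← Nat.card_congr (Equiv.ofBijective _ hbij), Nat.card_prod, sq]

end Involution

section Frobenius

lemma exists_star_ne {F : Type*} [Field F] [Fintype F] [StarRing F] {q : ℕ}
    (hF : Fintype.card F = q ^ 2) (hstar : ∀ x : F, star x = x ^ q) : ∃ x : F, star x ≠ x := by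
  by_contra! htrivial
  have hq : 1 < q := (one_lt_pow_iff two_ne_zero).1 (hF ▸ Fintype.one_lt_card)
  have hdvd : q ^ 2 - 1 ∣ q - 1 := by
    rw [← hF, ← FiniteField.forall_pow_eq_one_iff F]
    intro x
    have hx : x ^ q = x := Units.ext <| by rw [Units.val_pow_eq_pow_val, ← hstar, htrivial]
    rw [pow_sub x hq.le, hx, pow_one, mul_inv_cancel]
  have hlt : q - 1 < q ^ 2 - 1 := Nat.sub_lt_sub_right hq.le (lt_self_pow₀ hq one_lt_two)
  exact hlt.not_ge (Nat.le_of_dvd (Nat.sub_pos_of_lt hq) hdvd)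

lemma card_selfAdjoint_eq {F : Type*} [Field F] [Fintype F] [StarRing F] {q : ℕ}
    (hF : Fintype.card F = q ^ 2) (hstar : ∀ x : F, star x = x ^ q) :
    Nat.card (selfAdjoint F) = q := by
  apply Nat.pow_left_injective two_ne_zero
  change Nat.card (selfAdjoint F) ^ 2 = q ^ 2
  rw [← card_eq_card_selfAdjoint_sq (exists_star_ne hF hstar), Nat.card_eq_fintype_card, hF]

end Frobenius

section Bordered

variable {K ι : Type*} [Field K] [StarRing K]

/-- The matrix with corner entry `a`, remaining first column `v` and remaining block `D`, whose
first row is completed so that it is Hermitian as soon as `a` and `D` are. -/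
def bordered (a : K) (v : ι → K) (D : Matrix ι ι K) : Matrix (Unit ⊕ ι) (Unit ⊕ ι) K :=
  fromBlocks (of fun _ _ => a) (replicateRow Unit (star v)) (replicateCol Unit v) D

lemma isHermitian_bordered_iff {a : K} {v : ι → K} {D : Matrix ι ι K} :
    (bordered a v D).IsHermitian ↔ IsSelfAdjoint a ∧ D.IsHermitian := by
  have hcorner : (of fun _ _ => a : Matrix Unit Unit K).IsHermitian ↔ IsSelfAdjoint a :=
    ⟨fun h => h.apply () (), fun h => Matrix.ext fun _ _ => h⟩
  rw [bordered, isHermitian_fromBlocks_iff, hcorner, conjTranspose_replicateRow,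
    conjTranspose_replicateCol, star_star]
  simp

lemma bordered_eq_of_isHermitian {M : Matrix (Unit ⊕ ι) (Unit ⊕ ι) K} (hM : M.IsHermitian) :
    bordered (M (.inl ()) (.inl ())) (fun i => M (.inr i) (.inl ())) M.toBlocks₂₂ = M := by
  ext (i | i) (j | j)
  · rfl
  · exact hM.apply _ _
  · rfl
  · rfl

/-- Hermitian matrices correspond to their corner entry, first column and remaining block. The
predicate `P` lets the correspondence restrict to, say, invertible matrices. -/
def borderedEquiv (P : Matrix (Unit ⊕ ι) (Unit ⊕ ι) K → Prop) :
    {M : Matrix (Unit ⊕ ι) (Unit ⊕ ι) K // M.IsHermitian ∧ P M} ≃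
      Σ a : selfAdjoint K, Σ v : ι → K, {D : Matrix ι ι K // D.IsHermitian ∧ P (bordered a v D)}
    where
  toFun M :=
    have hbordered := bordered_eq_of_isHermitian M.2.1
    ⟨⟨M.1 (.inl ()) (.inl ()), M.2.1.apply _ _⟩, fun i => M.1 (.inr i) (.inl ()), M.1.toBlocks₂₂,
      (isHermitian_bordered_iff.1 (hbordered.symm ▸ M.2.1)).2, hbordered.symm ▸ M.2.2⟩
  invFun t := ⟨bordered t.1 t.2.1 t.2.2, isHermitian_bordered_iff.2 ⟨t.1.2, t.2.2.2.1⟩, t.2.2.2.2⟩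
  left_inv M := Subtype.ext (bordered_eq_of_isHermitian M.2.1)
  right_inv _ := rfl

lemma isHermitian_inv_smul_vecMulVec {a : K} (ha : IsSelfAdjoint a) (v : ι → K) :
    (a⁻¹ • vecMulVec v (star v)).IsHermitian := by
  rw [IsHermitian, conjTranspose_smul, conjTranspose_vecMulVec, star_star, ha.inv₀.star_eq]

variable [Fintype ι]

lemma bordered_mulVec (P : Matrix ι ι K) (a : K) (v : ι → K) (D : Matrix ι ι K) :
    bordered a (P *ᵥ v) (P * D * Pᴴ) =
      fromBlocks 1 0 0 P * bordered a v D * (fromBlocks 1 0 0 P)ᴴ := by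
  simp [bordered, fromBlocks_conjTranspose, fromBlocks_multiply, star_mulVec, replicateRow_vecMul,
    replicateCol_mulVec]

variable [DecidableEq ι]

lemma isUnit_bordered_iff {a : K} (ha : a ≠ 0) {v : ι → K} {D : Matrix ι ι K} :
    IsUnit (bordered a v D) ↔ IsUnit (D - a⁻¹ • vecMulVec v (star v)) := by
  let : Invertible (of fun _ _ => a : Matrix Unit Unit K) :=
    ⟨of fun _ _ => a⁻¹, by ext; simp [mul_apply, ha], by ext; simp [mul_apply, ha]⟩
  have hschur : replicateCol Unit v * ⅟(of fun _ _ => a : Matrix Unit Unit K) *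
      replicateRow Unit (star v) = a⁻¹ • vecMulVec v (star v) := by
    have hinv : ⅟(of fun _ _ => a : Matrix Unit Unit K) = of fun _ _ => a⁻¹ := rfl
    ext i j
    simp [hinv, mul_apply, vecMulVec_apply, mul_left_comm, mul_assoc]
  rw [bordered, isUnit_fromBlocks_iff_of_invertible₁₁, hschur]

lemma not_isUnit_bordered_zero_zero (D : Matrix ι ι K) : ¬ IsUnit (bordered 0 0 D) := by
  rw [isUnit_iff_isUnit_det, isUnit_iff_ne_zero, not_ne_iff]
  apply det_eq_zero_of_row_eq_zero (Sum.inl ())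
  rintro (j | j) <;> simp [bordered]

-- Swapping the first two columns turns the matrix into a block triangular one.
lemma isUnit_bordered_zero_single_iff (b : K) (c : ι → K) (D : Matrix ι ι K) :
    IsUnit (bordered 0 (Pi.single (Sum.inl ()) 1) (bordered b c D)) ↔ IsUnit D := by
  let σ : Equiv.Perm (Unit ⊕ Unit ⊕ ι) := Equiv.swap (Sum.inl ()) (Sum.inr (Sum.inl ()))
  have hswap : (bordered 0 (Pi.single (Sum.inl ()) 1) (bordered b c D)).submatrix (Equiv.refl _) σ =
      fromBlocks 1 0 (replicateCol Unit (Sum.elim (fun _ => b) c))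
        (fromBlocks 1 (replicateRow Unit (star c)) 0 D) := by
    ext (i | i | i) (j | j | j) <;> simp [bordered, σ, Equiv.swap_apply_def]
  rw [← isUnit_submatrix_equiv (Equiv.refl _) σ, hswap, isUnit_fromBlocks_zero₁₂,
    isUnit_fromBlocks_zero₂₁]
  simp

end Bordered

section Congruence

variable {K ι : Type*} [Field K] [Fintype ι] [DecidableEq ι]

lemma exists_isUnit_mulVec_eq {v w : ι → K} (hv : v ≠ 0) (hw : w ≠ 0) :
    ∃ P : Matrix ι ι K, IsUnit P ∧ P *ᵥ v = w := by
  obtain ⟨e, he⟩ := Submodule.exists_linearEquiv_restrict_eq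
    ((LinearEquiv.toSpanNonzeroSingleton K _ v hv).symm ≪≫ₗ
      LinearEquiv.toSpanNonzeroSingleton K _ w hw)
  refine ⟨LinearMap.toMatrix' e, ?_, ?_⟩
  · exact LinearMap.isUnit_toMatrix'_iff.2 ((LinearMap.isUnit_iff_ker_eq_bot _).2 e.ker)
  · have hv' := he (LinearEquiv.toSpanNonzeroSingleton K _ v hv 1)
    rw [LinearEquiv.trans_apply, LinearEquiv.symm_apply_apply] at hv'
    simpa [LinearMap.toMatrix'_mulVec] using hv'.symm

variable [StarRing K]

/-- The invertible Hermitian matrices; for the trivial involution, the invertible symmetric ones. -/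
abbrev InvertibleHermitian (K ι : Type*) [Field K] [StarRing K] [Fintype ι] [DecidableEq ι] :
    Type _ :=
  {M : Matrix ι ι K // M.IsHermitian ∧ IsUnit M}

lemma card_invertibleHermitian_congr {κ : Type*} [Fintype κ] [DecidableEq κ]
    (h : Fintype.card ι = Fintype.card κ) :
    Nat.card (InvertibleHermitian K ι) = Nat.card (InvertibleHermitian K κ) := by
  let e := Fintype.equivOfCardEq h
  refine Nat.card_congr ((reindex e e).subtypeEquiv fun M => ?_)
  rw [reindex_apply, isUnit_submatrix_equiv, isHermitian_submatrix_equiv]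

lemma card_isUnit_bordered_of_ne_zero (a : selfAdjoint K) (ha : a ≠ 0) (v : ι → K) :
    Nat.card {D : Matrix ι ι K // D.IsHermitian ∧ IsUnit (bordered (a : K) v D)} =
      Nat.card (InvertibleHermitian K ι) := by
  have ha' : (a : K) ≠ 0 := fun h => ha (Subtype.ext h)
  have hrank_one := isHermitian_inv_smul_vecMulVec a.2 v
  refine Nat.card_congr <|
    (Equiv.subRight ((a : K)⁻¹ • vecMulVec v (star v))).subtypeEquiv fun D => ?_
  rw [isUnit_bordered_iff ha']
  exact and_congr_left' ⟨fun h => h.sub hrank_one, fun h => by simpa using h.add hrank_one⟩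

variable [Finite K]

lemma card_isUnit_bordered_zero_le {v w : ι → K} (hv : v ≠ 0) (hw : w ≠ 0) :
    Nat.card {D : Matrix ι ι K // D.IsHermitian ∧ IsUnit (bordered 0 v D)} ≤
      Nat.card {D : Matrix ι ι K // D.IsHermitian ∧ IsUnit (bordered 0 w D)} := by
  obtain ⟨P, hP, rfl⟩ := exists_isUnit_mulVec_eq hv hw
  have hblock : IsUnit (fromBlocks (1 : Matrix Unit Unit K) 0 0 P) :=
    isUnit_fromBlocks_zero₁₂.2 ⟨isUnit_one, hP⟩
  refine Nat.card_le_card_of_injective (fun D => ⟨P * D.1 * Pᴴ,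
    isHermitian_mul_mul_conjTranspose P D.2.1, ?_⟩) fun D E h => ?_
  · rw [bordered_mulVec]
    exact (hblock.mul D.2.2).mul hblock.star
  · exact Subtype.ext (hP.mul_left_cancel (hP.star.mul_right_cancel (congrArg Subtype.val h)))

lemma card_isUnit_bordered_zero_single :
    Nat.card {D : Matrix (Unit ⊕ ι) (Unit ⊕ ι) K //
      D.IsHermitian ∧ IsUnit (bordered 0 (Pi.single (Sum.inl ()) 1) D)} =
      Nat.card (selfAdjoint K) *
        (Nat.card K ^ Fintype.card ι * Nat.card (InvertibleHermitian K ι)) := by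
  have := Fintype.ofFinite K
  have := Fintype.ofFinite (selfAdjoint K)
  rw [Nat.card_congr (borderedEquiv _)]
  simp [Nat.card_sigma, isUnit_bordered_zero_single_iff]

lemma card_isUnit_bordered_zero {v : Unit ⊕ ι → K} (hv : v ≠ 0) :
    Nat.card {D : Matrix (Unit ⊕ ι) (Unit ⊕ ι) K // D.IsHermitian ∧ IsUnit (bordered 0 v D)} =
      Nat.card (selfAdjoint K) *
        (Nat.card K ^ Fintype.card ι * Nat.card (InvertibleHermitian K ι)) := by
  have hsingle : (Pi.single (Sum.inl ()) 1 : Unit ⊕ ι → K) ≠ 0 := by simp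
  rw [← card_isUnit_bordered_zero_single]
  exact (card_isUnit_bordered_zero_le hv hsingle).antisymm (card_isUnit_bordered_zero_le hsingle hv)

lemma card_invertibleHermitian_unit_sum :
    Nat.card (InvertibleHermitian K (Unit ⊕ ι)) =
      (Nat.card (selfAdjoint K) - 1) *
        (Nat.card K ^ Fintype.card ι * Nat.card (InvertibleHermitian K ι)) +
      Nat.card (Σ v : ι → K, {D : Matrix ι ι K // D.IsHermitian ∧ IsUnit (bordered 0 v D)}) := by
  have := Fintype.ofFinite K
  rw [Nat.card_congr (borderedEquiv _), card_sigma_of_forall_ne 0 fun a ha => ?_]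
  · rfl
  · rw [Nat.card_sigma, Finset.sum_congr rfl fun v _ => card_isUnit_bordered_of_ne_zero a ha v]
    simp

lemma card_invertibleHermitian_unit_sum_unit_sum :
    Nat.card (InvertibleHermitian K (Unit ⊕ Unit ⊕ ι)) =
      (Nat.card (selfAdjoint K) - 1) *
        (Nat.card K ^ (Fintype.card ι + 1) * Nat.card (InvertibleHermitian K (Unit ⊕ ι))) +
      (Nat.card K ^ (Fintype.card ι + 1) - 1) *
        (Nat.card (selfAdjoint K) *
          (Nat.card K ^ Fintype.card ι * Nat.card (InvertibleHermitian K ι))) := by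
  rw [card_invertibleHermitian_unit_sum,
    card_sigma_of_forall_ne 0 fun v hv => card_isUnit_bordered_zero hv]
  have hcard : Nat.card (Unit ⊕ ι → K) = Nat.card K ^ (Fintype.card ι + 1) := by
    rw [Nat.card_fun]
    simp [add_comm]
  simp [hcard, not_isUnit_bordered_zero_zero, add_comm (Fintype.card ι)]

end Congruence

section InvertibleHermitianCount

variable {K : Type*} [Field K] [StarRing K] [Finite K]

lemma card_invertibleHermitian_fin_one :
    Nat.card (InvertibleHermitian K (Fin 1)) = Nat.card (selfAdjoint K) - 1 := by
  have : IsEmpty (Σ v : Fin 0 → K,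
      {D : Matrix (Fin 0) (Fin 0) K // D.IsHermitian ∧ IsUnit (bordered 0 v D)}) :=
    ⟨fun ⟨v, D⟩ => not_isUnit_bordered_zero_zero D.1 (Subsingleton.elim v 0 ▸ D.2.2)⟩
  rw [← card_invertibleHermitian_congr (ι := Unit ⊕ Fin 0) (by simp),
    card_invertibleHermitian_unit_sum]
  simp

lemma card_invertibleHermitian_fin_add_two (n : ℕ) :
    Nat.card (InvertibleHermitian K (Fin (n + 2))) =
      (Nat.card (selfAdjoint K) - 1) *
        (Nat.card K ^ (n + 1) * Nat.card (InvertibleHermitian K (Fin (n + 1)))) +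
      (Nat.card K ^ (n + 1) - 1) *
        (Nat.card (selfAdjoint K) *
          (Nat.card K ^ n * Nat.card (InvertibleHermitian K (Fin n)))) := by
  rw [← card_invertibleHermitian_congr (ι := Unit ⊕ Unit ⊕ Fin n) (by simp +arith),
    card_invertibleHermitian_unit_sum_unit_sum, Fintype.card_fin,
    card_invertibleHermitian_congr (κ := Fin (n + 1)) (by simp [add_comm])]

lemma card_invertibleHermitian_fin (hstar : ∃ x : K, star x ≠ x) {q : ℕ}
    (hq : Nat.card (selfAdjoint K) = q) (n : ℕ) :
    (Nat.card (InvertibleHermitian K (Fin n)) : ℤ) =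
      ∏ i ∈ Finset.range n, ((q : ℤ) ^ i * ((q : ℤ) ^ (i + 1) + (-1) ^ (i + 1))) := by
  have hq_pos : 1 ≤ q := hq ▸ Nat.card_pos
  induction n using Nat.twoStepInduction with
  | zero => simp
  | one => simp [card_invertibleHermitian_fin_one, hq, Nat.cast_sub hq_pos, sub_eq_add_neg]
  | more n ih_n ih_succ =>
    have hpow : 1 ≤ (q ^ 2) ^ (n + 1) := Nat.one_le_pow _ _ (pow_pos hq_pos 2)
    rw [card_invertibleHermitian_fin_add_two, card_eq_card_selfAdjoint_sq hstar, hq]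
    push_cast [Nat.cast_sub hq_pos, Nat.cast_sub hpow]
    rw [ih_n, ih_succ, Finset.prod_range_succ _ (n + 1), Finset.prod_range_succ _ n]
    rcases neg_one_pow_eq_or ℤ n with h | h
    · simp only [pow_succ, h]
      ring
    · simp only [pow_succ, h]
      ring

end InvertibleHermitianCount

section InvertibleSymmetricCount

variable {L : Type*} [Field L] [Finite L]

lemma card_isSymm_isUnit_fin {q : ℕ} (hq : Nat.card L = q) (n : ℕ) :
    (Nat.card {M : Matrix (Fin n) (Fin n) L // M.IsSymm ∧ IsUnit M} : ℤ) =
      ∏ i ∈ Finset.range n, ((q : ℤ) ^ (i + 1) - if Odd (i + 1) then 1 else 0) := by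
  let : StarRing L := starRingOfComm
  have hherm (m : ℕ) : Nat.card {M : Matrix (Fin m) (Fin m) L // M.IsSymm ∧ IsUnit M} =
      Nat.card (InvertibleHermitian L (Fin m)) := rfl
  have hfixed : Nat.card (selfAdjoint L) = q :=
    hq ▸ Nat.card_congr (Equiv.subtypeUnivEquiv fun _ => rfl)
  have hq_pos : 1 ≤ q := hq ▸ Nat.card_pos
  simp only [hherm]
  induction n using Nat.twoStepInduction with
  | zero => simp
  | one => simp [card_invertibleHermitian_fin_one, hfixed, Nat.cast_sub hq_pos]
  | more n ih_n ih_succ =>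
    rw [card_invertibleHermitian_fin_add_two, hq, hfixed]
    push_cast [Nat.cast_sub hq_pos, Nat.cast_sub (Nat.one_le_pow (n + 1) q hq_pos)]
    rw [ih_n, ih_succ, Finset.prod_range_succ _ (n + 1), Finset.prod_range_succ _ n]
    rcases n.even_or_odd with h | h
    · rw [if_pos h.add_one, if_neg (Nat.not_odd_iff_even.2 h.add_one.add_one)]
      ring
    · rw [if_neg (Nat.not_odd_iff_even.2 h.add_one), if_pos h.add_one.add_one]
      ring

end InvertibleSymmetricCount

section HermitianFactorization

variable {K ι : Type*} [Field K] [StarRing K] [Fintype ι]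

lemma exists_dotProduct_mulVec_ne_zero (hstar : ∃ x : K, star x ≠ x) {M : Matrix ι ι K}
    (hM : M.IsHermitian) (hM0 : M ≠ 0) : ∃ v : ι → K, star v ⬝ᵥ M *ᵥ v ≠ 0 := by
  classical
  by_contra! hiso
  have hswap (v w : ι → K) : star w ⬝ᵥ M *ᵥ v = star (star v ⬝ᵥ M *ᵥ w) := by
    rw [← star_dotProduct_star, star_star, star_mulVec, hM.eq, ← dotProduct_mulVec,
      dotProduct_comm]
  have hpolar (v w : ι → K) : star v ⬝ᵥ M *ᵥ w + star (star v ⬝ᵥ M *ᵥ w) = 0 := by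
    have hsum := hiso (v + w)
    rw [star_add, mulVec_add, add_dotProduct, dotProduct_add, dotProduct_add, hiso, hiso,
      hswap v w, zero_add, add_zero] at hsum
    exact hsum
  obtain ⟨i, j, hij⟩ : ∃ i j, M i j ≠ 0 := by
    by_contra! h
    exact hM0 (Matrix.ext h)
  obtain ⟨x, hx⟩ := exists_add_star_ne_zero hstar
  have hentry : star (Pi.single i 1 : ι → K) ⬝ᵥ M *ᵥ Pi.single j (x / M i j) = x := by
    rw [← Pi.single_star]
    simp [div_eq_mul_inv, mul_left_comm, hij]
  exact hx (by simpa only [hentry] using hpolar (Pi.single i 1) (Pi.single j (x / M i j)))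

lemma conjTranspose_mul_self_eq_bordered {y : K} (hy : y ≠ 0) {v : ι → K} {A D : Matrix ι ι K}
    (hA : Aᴴ * A = D - (y * star y)⁻¹ • vecMulVec v (star v)) :
    let B := fromBlocks (of fun _ _ : Unit => y) (replicateRow Unit ((star y)⁻¹ • star v)) 0 A
    Bᴴ * B = bordered (y * star y) v D := by
  have hy' : star y ≠ 0 := star_ne_zero.2 hy
  simp only [fromBlocks_conjTranspose, fromBlocks_multiply, bordered, hA]
  congr 1
  · ext
    simp [mul_apply, mul_comm]
  · ext
    simp [mul_apply, hy']
  · ext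
    simp [mul_apply, hy, mul_comm]
  · ext
    simp [mul_apply, vecMulVec_apply, mul_assoc, mul_left_comm]

variable [DecidableEq ι]

lemma exists_conjTranspose_mul_self_eq_of_congruent {M P A : Matrix ι ι K} (hP : IsUnit P)
    (h : Aᴴ * A = Pᴴ * M * P) : ∃ B, Bᴴ * B = M := by
  have hdet := (isUnit_iff_isUnit_det _).1 hP
  have hdet' : IsUnit (Pᴴ).det := (isUnit_iff_isUnit_det _).1 hP.star
  refine ⟨A * P⁻¹, ?_⟩
  calc (A * P⁻¹)ᴴ * (A * P⁻¹) = Pᴴ⁻¹ * (Aᴴ * A) * P⁻¹ := by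
        simp only [conjTranspose_mul, conjTranspose_nonsing_inv, Matrix.mul_assoc]
    _ = (Pᴴ⁻¹ * Pᴴ) * M * (P * P⁻¹) := by simp only [h, Matrix.mul_assoc]
    _ = M := by
        rw [nonsing_inv_mul _ hdet', mul_nonsing_inv _ hdet, Matrix.one_mul, Matrix.mul_one]

lemma exists_conjTranspose_mul_self_eq_sum [Finite K] (hstar : ∃ x : K, star x ≠ x)
    (ih : ∀ D : Matrix ι ι K, D.IsHermitian → IsUnit D → ∃ A, Aᴴ * A = D)
    {M : Matrix (Unit ⊕ ι) (Unit ⊕ ι) K} (hM : M.IsHermitian) (hMu : IsUnit M) :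
    ∃ A, Aᴴ * A = M := by
  obtain ⟨w, hw⟩ := exists_dotProduct_mulVec_ne_zero hstar hM hMu.ne_zero
  have hw0 : w ≠ 0 := by
    rintro rfl
    simp at hw
  have hsingle : (Pi.single (Sum.inl ()) 1 : Unit ⊕ ι → K) ≠ 0 := by simp
  obtain ⟨P, hP, rfl⟩ := exists_isUnit_mulVec_eq hsingle hw0
  have hN : (Pᴴ * M * P).IsHermitian := isHermitian_conjTranspose_mul_mul P hM
  obtain ⟨⟨a, v, D, hD⟩, hbordered⟩ := (borderedEquiv IsUnit).symm.surjective
    ⟨Pᴴ * M * P, hN, (hP.star.mul hMu).mul hP⟩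
  have hbordered : bordered (a : K) v D = Pᴴ * M * P := congrArg Subtype.val hbordered
  have hform : star (P *ᵥ Pi.single (.inl ()) 1) ⬝ᵥ M *ᵥ P *ᵥ Pi.single (.inl ()) 1 = (a : K) := by
    rw [star_mulVec, ← dotProduct_mulVec, mulVec_mulVec, mulVec_mulVec, ← hbordered,
      ← Pi.single_star]
    simp [bordered]
  have ha : (a : K) ≠ 0 := hform ▸ hw
  obtain ⟨y, hy⟩ := exists_mul_star_eq hstar a.2
  have hy0 : y ≠ 0 := by
    rintro rfl
    exact ha (by rw [← hy, zero_mul])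
  rw [← hy] at hbordered hD
  have hschur : (D - (y * star y)⁻¹ • vecMulVec v (star v)).IsHermitian :=
    hD.1.sub (isHermitian_inv_smul_vecMulVec (.mul_star_self y) v)
  obtain ⟨A, hA⟩ := ih _ hschur ((isUnit_bordered_iff (hy ▸ ha)).1 hD.2)
  exact exists_conjTranspose_mul_self_eq_of_congruent hP
    ((conjTranspose_mul_self_eq_bordered hy0 hA).trans hbordered)

lemma exists_conjTranspose_mul_self_eq [Finite K] (hstar : ∃ x : K, star x ≠ x) {n : ℕ}
    {M : Matrix (Fin n) (Fin n) K} (hM : M.IsHermitian) (hMu : IsUnit M) : ∃ A, Aᴴ * A = M := by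
  induction n with
  | zero => exact ⟨1, Subsingleton.elim _ _⟩
  | succ n ih =>
    let e : Unit ⊕ Fin n ≃ Fin (n + 1) := Fintype.equivOfCardEq (by simp [add_comm])
    obtain ⟨A, hA⟩ := exists_conjTranspose_mul_self_eq_sum hstar (fun _ => ih)
      (hM.submatrix e) ((isUnit_submatrix_equiv e e).2 hMu)
    refine ⟨A.submatrix e.symm e.symm, ?_⟩
    rw [conjTranspose_submatrix, submatrix_mul_equiv, hA]
    simp

end HermitianFactorization

section HilbertNinety

variable {K ι : Type*} [Field K] [StarRing K] [Fintype ι]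

lemma star_mulVec_eq_map_mulVec {κ : Type*} (A : Matrix κ ι K) (v : ι → K) :
    star (A *ᵥ v) = A.map (starRingEnd K) *ᵥ star v := by
  rw [star_mulVec, ← mulVec_transpose]
  rfl

variable [DecidableEq ι]

-- Every `v + g *ᵥ star v` is fixed by the semilinear involution `v ↦ g *ᵥ star v`, and so is every
-- `c • v + star c • g *ᵥ star v`; these two combine to `v`.
lemma span_fixed_eq_top (hstar : ∃ x : K, star x ≠ x) {g : Matrix ι ι K}
    (hg : g * g.map (starRingEnd K) = 1) :
    Submodule.span K {v : ι → K | g *ᵥ star v = v} = ⊤ := by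
  obtain ⟨e, he⟩ := hstar
  have htrace (v : ι → K) (c : K) :
      c • v + star c • g *ᵥ star v ∈ Submodule.span K {v : ι → K | g *ᵥ star v = v} := by
    refine Submodule.subset_span ?_
    change g *ᵥ star _ = _
    rw [star_add, star_smul, star_smul, star_star, star_mulVec_eq_map_mulVec, star_star,
      mulVec_add, mulVec_smul, mulVec_smul, mulVec_mulVec, hg, one_mulVec, add_comm]
  refine Submodule.eq_top_iff'.2 fun v => ?_
  have hcomb := Submodule.smul_mem _ (e - star e)⁻¹
    (Submodule.sub_mem _ (htrace v e) (Submodule.smul_mem _ (star e) (htrace v 1)))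
  convert hcomb using 1
  rw [eq_inv_smul_iff₀ (sub_ne_zero.2 he.symm)]
  simp only [star_one, one_smul, smul_add, sub_smul]
  abel

lemma exists_isUnit_mul_map_eq (hstar : ∃ x : K, star x ≠ x) {g : Matrix ι ι K}
    (hg : g * g.map (starRingEnd K) = 1) :
    ∃ P : Matrix ι ι K, IsUnit P ∧ g * P.map (starRingEnd K) = P := by
  have hspan := span_fixed_eq_top hstar hg
  obtain ⟨f, hfixed, -, hlin⟩ :=
    Submodule.exists_fun_fin_finrank_span_eq K {v : ι → K | g *ᵥ star v = v}
  let σ : ι ≃ Fin (Module.finrank K (Submodule.span K {v : ι → K | g *ᵥ star v = v})) :=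
    Fintype.equivOfCardEq (by
      rw [Fintype.card_fin, hspan, finrank_top, Module.finrank_fintype_fun_eq_card])
  refine ⟨(of (f ∘ σ))ᵀ, ?_, ?_⟩
  · exact linearIndependent_cols_iff_isUnit.1 (hlin.comp σ σ.injective)
  · ext i j
    exact congrFun (hfixed (σ j)) i

end HilbertNinety

section Descent

lemma isUnit_matrix_map_iff {ι L F : Type*} [Fintype ι] [DecidableEq ι] [Field L] [Field F]
    (f : L →+* F) {B : Matrix ι ι L} : IsUnit (B.map f) ↔ IsUnit B := by
  rw [isUnit_iff_isUnit_det, isUnit_iff_isUnit_det, ← RingHom.mapMatrix_apply, ← RingHom.map_det,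
    isUnit_map_iff]

variable {K ι : Type*} [Field K] [StarRing K]

/-- The embedding of the fixed field of the involution, which Mathlib encodes as an additive
subgroup with a field instance. -/
def selfAdjointInclusion (K : Type*) [Field K] [StarRing K] : selfAdjoint K →+* K where
  toFun := Subtype.val
  map_one' := rfl
  map_mul' _ _ := rfl
  map_zero' := rfl
  map_add' _ _ := rfl

/-- Descent: matrices over the fixed field correspond to the matrices over `K` that are fixed by
entrywise conjugation. -/
def matrixSelfAdjointEquiv :
    Matrix ι ι (selfAdjoint K) ≃ {A : Matrix ι ι K // A.map (starRingEnd K) = A} where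
  toFun B := ⟨B.map (selfAdjointInclusion K), Matrix.ext fun i j => (B i j).2⟩
  invFun A := of fun i j => ⟨A.1 i j, congrFun (congrFun A.2 i) j⟩
  left_inv _ := rfl
  right_inv _ := rfl

lemma card_map_starRingEnd_eq_and (P : Matrix ι ι K → Prop) :
    Nat.card {A : Matrix ι ι K // A.map (starRingEnd K) = A ∧ P A} =
      Nat.card {B : Matrix ι ι (selfAdjoint K) // P (B.map (selfAdjointInclusion K))} :=
  Nat.card_congr <| (Equiv.subtypeSubtypeEquivSubtypeInter _ P).symm.trans
    (matrixSelfAdjointEquiv.subtypeEquiv fun _ => Iff.rfl).symm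

variable [Fintype ι] [DecidableEq ι]

lemma card_isSymm_invertibleHermitian :
    Nat.card {M : InvertibleHermitian K ι // (M : Matrix ι ι K).IsSymm} =
      Nat.card {B : Matrix ι ι (selfAdjoint K) // B.IsSymm ∧ IsUnit B} := by
  have hiff (M : Matrix ι ι K) :
      (M.IsHermitian ∧ IsUnit M) ∧ M.IsSymm ↔
        M.map (starRingEnd K) = M ∧ M.IsSymm ∧ IsUnit M := by
    have hherm (hM : M.IsSymm) : M.IsHermitian ↔ M.map (starRingEnd K) = M := by
      rw [IsHermitian, conjTranspose, hM.eq]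
      rfl
    rw [and_assoc, and_comm (a := IsUnit M)]
    exact and_congr_left fun hM => hherm hM.1
  rw [Nat.card_congr ((Equiv.subtypeSubtypeEquivSubtypeInter _ _).trans
    (Equiv.subtypeEquivRight hiff)), card_map_starRingEnd_eq_and]
  refine Nat.card_congr (Equiv.subtypeEquivRight fun B => ?_)
  rw [isUnit_matrix_map_iff, isSymm_map_iff (selfAdjointInclusion K).injective]

lemma card_map_starRingEnd_eq_generalLinearGroup :
    Nat.card {k : GL ι K // GeneralLinearGroup.map (starRingEnd K) k = k} =
      Nat.card (GL ι (selfAdjoint K)) := by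
  refine (Nat.card_eq_of_bijective
    (fun B : GL ι (selfAdjoint K) => ⟨GeneralLinearGroup.map (selfAdjointInclusion K) B,
      GeneralLinearGroup.ext fun i j => (B i j).2⟩) ⟨fun B C h => ?_, fun ⟨k, hk⟩ => ?_⟩).symm
  · exact GeneralLinearGroup.ext fun i j => (selfAdjointInclusion K).injective <|
      congrArg (fun k => (k : GL ι K) i j) (congrArg Subtype.val h)
  · obtain ⟨B, hB⟩ := matrixSelfAdjointEquiv.surjective
      ⟨(k : Matrix ι ι K), congrArg Units.val hk⟩
    have hB : B.map (selfAdjointInclusion K) = k := congrArg Subtype.val hB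
    lift B to GL ι (selfAdjoint K) using
      (isUnit_matrix_map_iff (selfAdjointInclusion K)).1 (hB ▸ k.isUnit)
    exact ⟨B, Subtype.ext (Units.ext hB)⟩

end Descent

section DoubleCount

variable {K ι : Type*} [Field K] [StarRing K] [Fintype ι] [DecidableEq ι]

lemma isSymm_transpose_mul_mul_iff {R : Type*} [CommRing R] {S C : Matrix ι ι R} (hC : IsUnit C) :
    (Cᵀ * S * C).IsSymm ↔ S.IsSymm := by
  have hC' : IsUnit Cᵀ := (isUnit_transpose C).2 hC
  rw [IsSymm, transpose_mul, transpose_mul, transpose_transpose, ← Matrix.mul_assoc,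
    hC.mul_left_inj, hC'.mul_right_inj, IsSymm]

lemma isSymm_conjTranspose_mul_self_iff (h : GL ι K) :
    ((h : Matrix ι ι K)ᴴ * h).IsSymm ↔
      (h * (GeneralLinearGroup.map (starRingEnd K) h)⁻¹ : GL ι K).1.IsSymm := by
  set c := GeneralLinearGroup.map (starRingEnd K) h
  have hmul : (h : Matrix ι ι K)ᴴ * h = (c : Matrix ι ι K)ᵀ * (h * c⁻¹ : GL ι K).1 * c := by
    rw [Matrix.mul_assoc, ← Units.val_mul, inv_mul_cancel_right]
    rfl
  rw [hmul, isSymm_transpose_mul_mul_iff c.isUnit]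

lemma card_isSymm_unitaryGroup :
    Nat.card {g : unitaryGroup ι K // (g : Matrix ι ι K)ᵀ = g} =
      Nat.card {g : GL ι K //
        g * GeneralLinearGroup.map (starRingEnd K) g = 1 ∧ (g : Matrix ι ι K).IsSymm} := by
  have hiff (g : GL ι K) (hg : (g : Matrix ι ι K).IsSymm) :
      g * GeneralLinearGroup.map (starRingEnd K) g = 1 ↔ (g : Matrix ι ι K) ∈ unitaryGroup ι K := by
    rw [mem_unitaryGroup_iff, star_eq_conjTranspose, conjTranspose, hg.eq, Units.ext_iff]
    rfl
  exact Nat.card_congr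
    { toFun g := ⟨Unitary.toUnits g.1, (hiff (Unitary.toUnits g.1) g.2).2 g.1.2, g.2⟩
      invFun g := ⟨⟨g.1, (hiff _ g.2.2).1 g.2.1⟩, g.2.2⟩
      left_inv _ := rfl
      right_inv _ := Subtype.ext (Units.ext rfl) }

lemma conjTranspose_mul_self_mul_eq_iff {U A : Matrix ι ι K} (hA : IsUnit A) :
    (U * A)ᴴ * (U * A) = Aᴴ * A ↔ Uᴴ * U = 1 := by
  have hA_star : IsUnit Aᴴ := hA.star
  rw [conjTranspose_mul, Matrix.mul_assoc, hA_star.mul_right_inj, ← Matrix.mul_assoc,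
    hA.mul_eq_right]

variable [Finite K]

lemma card_isSymm_conjTranspose_mul_self (hstar : ∃ x : K, star x ≠ x) :
    Nat.card {h : GL ι K // ((h : Matrix ι ι K)ᴴ * h).IsSymm} =
      Nat.card {g : unitaryGroup ι K // (g : Matrix ι ι K)ᵀ = g} *
        Nat.card (GL ι (selfAdjoint K)) := by
  let conj := GeneralLinearGroup.map (n := ι) (starRingEnd K)
  have hconj (h : GL ι K) : conj (conj h) = h :=
    GeneralLinearGroup.ext fun i j => star_star (h i j)
  rw [card_isSymm_unitaryGroup]
  refine card_subtype_eq_mul_of_card_fiber (fun h => h * (conj h)⁻¹) (fun h => ?_) fun g hg => ?_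
  · have hcocycle : h * (conj h)⁻¹ * conj (h * (conj h)⁻¹) = 1 := by
      rw [map_mul, map_inv, hconj, mul_assoc, inv_mul_cancel_left, mul_inv_cancel]
    rw [isSymm_conjTranspose_mul_self_iff]
    exact (and_iff_right hcocycle).symm
  · obtain ⟨P, hP, hgP⟩ := exists_isUnit_mul_map_eq hstar (congrArg Units.val hg.1)
    lift P to GL ι K using hP
    have hgP : g * conj P = P := Units.ext hgP
    rw [← card_map_starRingEnd_eq_generalLinearGroup]
    refine (Nat.card_congr ((Equiv.mulLeft P).subtypeEquiv fun k => ?_)).symm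
    change conj k = k ↔ P * k * (conj (P * k))⁻¹ = g
    rw [mul_inv_eq_iff_eq_mul, map_mul, ← mul_assoc, hgP, mul_right_inj, eq_comm]

lemma card_subtype_conjTranspose_mul_self (hstar : ∃ x : K, star x ≠ x) {n : ℕ}
    (P : Matrix (Fin n) (Fin n) K → Prop) :
    Nat.card {h : GL (Fin n) K // P ((h : Matrix (Fin n) (Fin n) K)ᴴ * h)} =
      Nat.card {M : InvertibleHermitian K (Fin n) // P M} *
        Nat.card {u : GL (Fin n) K // (u : Matrix (Fin n) (Fin n) K)ᴴ * u = 1} := by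
  let gram (h : GL (Fin n) K) : InvertibleHermitian K (Fin n) :=
    ⟨(h : Matrix (Fin n) (Fin n) K)ᴴ * h, isHermitian_conjTranspose_mul_self _,
      h.isUnit.star.mul h.isUnit⟩
  refine card_subtype_eq_mul_of_card_fiber gram (q := fun M => P M) (fun _ => Iff.rfl) fun M _ => ?_
  obtain ⟨A, hA⟩ := exists_conjTranspose_mul_self_eq hstar M.2.1 M.2.2
  lift A to GL (Fin n) K using isUnit_of_mul_isUnit_right (hA ▸ M.2.2)
  refine (Nat.card_congr ((Equiv.mulRight A).subtypeEquiv fun u => ?_)).symm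
  rw [← conjTranspose_mul_self_mul_eq_iff A.isUnit, hA]
  exact (Subtype.ext_iff (a1 := gram (u * A))).symm

lemma card_isSymm_unitaryGroup_mul (hstar : ∃ x : K, star x ≠ x) (n : ℕ) :
    Nat.card {g : unitaryGroup (Fin n) K // (g : Matrix (Fin n) (Fin n) K)ᵀ = g} *
        (Nat.card (GL (Fin n) (selfAdjoint K)) * Nat.card (InvertibleHermitian K (Fin n))) =
      Nat.card {B : Matrix (Fin n) (Fin n) (selfAdjoint K) // B.IsSymm ∧ IsUnit B} *
        Nat.card (GL (Fin n) K) := by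
  have hall := card_subtype_conjTranspose_mul_self hstar (n := n) fun _ => True
  have hsymm := card_subtype_conjTranspose_mul_self hstar (n := n) IsSymm
  rw [Nat.card_congr (Equiv.subtypeUnivEquiv fun _ => trivial),
    Nat.card_congr (Equiv.subtypeUnivEquiv fun _ => trivial)] at hall
  rw [card_isSymm_conjTranspose_mul_self hstar, card_isSymm_invertibleHermitian] at hsymm
  rw [← mul_assoc, hsymm, hall]
  ring

end DoubleCount

section UnitaryCount

lemma card_generalLinearGroup_fin {L : Type*} [Field L] [Finite L] {q : ℕ}
    (hq : Nat.card L = q) (n : ℕ) :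
    (Nat.card (GL (Fin n) L) : ℤ) =
      ∏ i ∈ Finset.range n, ((q : ℤ) ^ i * ((q : ℤ) ^ (i + 1) - 1)) := by
  have := Fintype.ofFinite L
  have hq_pos : 1 ≤ q := hq ▸ Nat.card_pos
  rw [card_GL_field, ← Nat.card_eq_fintype_card, hq,
    Fin.prod_univ_eq_prod_range (fun i => q ^ n - q ^ i) n, Finset.prod_mul_distrib,
    ← Finset.prod_range_reflect (fun i => (q : ℤ) ^ (i + 1) - 1), ← Finset.prod_mul_distrib,
    Nat.cast_prod]
  refine Finset.prod_congr rfl fun i hi => ?_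
  have hi := Finset.mem_range.1 hi
  rw [Nat.cast_sub (Nat.pow_le_pow_right hq_pos hi.le), Nat.cast_pow, Nat.cast_pow, mul_sub,
    ← pow_add, mul_one, show i + (n - 1 - i + 1) = n by omega]

theorem card_symmetric_unitary_general {K : Type*} [Field K] [Finite K] [StarRing K]
    (hstar : ∃ x : K, star x ≠ x) (n : ℕ) :
    Nat.card {g : unitaryGroup (Fin n) K // (g : Matrix (Fin n) (Fin n) K)ᵀ = g} =
      ∏ i ∈ Finset.Icc 1 n,
        if Odd i then Nat.card (selfAdjoint K) ^ i + 1 else Nat.card (selfAdjoint K) ^ i := by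
  obtain ⟨q, hq⟩ : ∃ q, Nat.card (selfAdjoint K) = q := ⟨_, rfl⟩
  have hcard : Nat.card K = q ^ 2 := hq ▸ card_eq_card_selfAdjoint_sq hstar
  have : Nonempty (InvertibleHermitian K (Fin n)) := ⟨1, isHermitian_one, isUnit_one⟩
  refine Nat.eq_of_mul_eq_mul_right (Nat.mul_pos Nat.card_pos Nat.card_pos) <|
    (card_isSymm_unitaryGroup_mul hstar n).trans <| Nat.cast_injective (R := ℤ) ?_
  push_cast
  rw [hq, card_generalLinearGroup_fin hq, card_generalLinearGroup_fin hcard,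
    card_invertibleHermitian_fin hstar hq, card_isSymm_isUnit_fin hq,
    ← Finset.Ico_add_one_right_eq_Icc, Finset.prod_Ico_eq_prod_range]
  simp only [← Finset.prod_mul_distrib, Nat.add_sub_cancel, add_comm 1]
  refine Finset.prod_congr rfl fun i _ => ?_
  split_ifs with h
  · rw [h.neg_one_pow]
    push_cast
    ring
  · rw [(Nat.not_odd_iff_even.1 h).neg_one_pow]
    push_cast
    ring

end UnitaryCount

/-- The number of symmetric matrices in the finite unitary group `U(n, F_{q²})`
(realized as `Matrix.unitaryGroup` over the field with `q²` elements, with star operation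
the Frobenius `x ↦ x^q`) equals `(q+1)·q²·(q³+1)·q⁴ ⋯`, i.e.
`Π_{i=1}^{n} (q^i + 1 if i odd, q^i if i even)`. -/
theorem card_symmetric_unitary (q n : ℕ)
    (hq : ∃ p k, Nat.Prime p ∧ 0 < k ∧ q = p ^ k)
    (F : Type) [Field F] [Fintype F] [StarRing F]
    (hF : Fintype.card F = q ^ 2) (hstar : ∀ x : F, star x = x ^ q) :
    Nat.card {g : Matrix.unitaryGroup (Fin n) F //
        (g : Matrix (Fin n) (Fin n) F).transpose = (g : Matrix (Fin n) (Fin n) F)}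
      = ∏ i ∈ Finset.Icc 1 n, (if Odd i then q ^ i + 1 else q ^ i) := by
  rw [← card_selfAdjoint_eq hF hstar]
  exact card_symmetric_unitary_general (exists_star_ne hF hstar) n
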